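/- Let X ⊂ ℙⁿ be a complete intersection of irreducible hypersurfaces with dim X = r ≥ 2. If the singular locus of X has codimension ≥ 2 in X, then X is irreducible. -/

import Mathlib

/-!
At a smooth point the local ring of the cone over `X` is regular, hence a domain, so two distinct
components of the cone can meet only in its singular locus, which has codimension at least `2`. At
the vertex the local ring of the complete intersection is Cohen–Macaulay. By Hartshorne's
connectedness theorem, deleting a closed subset of codimension at least `2` from its spectrum leaves
a connected space, so there cannot be two groups of components meeting only in such a subset, and
the local ring has a single minimal prime. As a homogeneous ideal is detected at the vertex, by
restricting functions to lines through the origin, the cone is irreducible.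
-/

open MvPolynomial

noncomputable section

/-- An (affine) algebraic subset of `ℂ^ι`: the common zero locus of a set of polynomials. -/
def IsAlgSet {ι : Type*} (S : Set (ι → ℂ)) : Prop :=
  ∃ T : Set (MvPolynomial ι ℂ), S = {x | ∀ p ∈ T, eval x p = 0}

/-- Irreducibility of a set in the Zariski sense. -/
def AlgIrreducible {ι : Type*} (S : Set (ι → ℂ)) : Prop :=
  S.Nonempty ∧ ∀ A B : Set (ι → ℂ), IsAlgSet A → IsAlgSet B →
    S ⊆ A ∪ B → S ⊆ A ∨ S ⊆ B

/-- Krull dimension of a set, via chains of irreducible algebraic subsets. -/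
def algDim {ι : Type*} (S : Set (ι → ℂ)) : WithBot ℕ∞ :=
  Order.krullDim {T : Set (ι → ℂ) // IsAlgSet T ∧ AlgIrreducible T ∧ T ⊆ S}

/-- A polynomial function on a complex vector space. -/
def IsPolynomialFun {M : Type*} [AddCommGroup M] [Module ℂ M] (g : M → ℂ) : Prop :=
  ∃ (k : ℕ) (l : Fin k → (M →ₗ[ℂ] ℂ)) (p : MvPolynomial (Fin k) ℂ),
    ∀ m, g m = eval (fun i => l i m) p

/-- A Zariski-open subset of a complex vector space: the complement of a common zero
locus of polynomial functions. -/
def IsZariskiOpen {M : Type*} [AddCommGroup M] [Module ℂ M] (U : Set M) : Prop :=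
  ∃ T : Set (M → ℂ), (∀ g ∈ T, IsPolynomialFun g) ∧ Uᶜ = {m | ∀ g ∈ T, g m = 0}
section KrullDimension

variable {A : Type*} [CommRing A]

theorem ringKrullDim_quotient_add_one_le_of_lt {P I : Ideal A} [P.IsPrime] (h : P < I) :
    ringKrullDim (A ⧸ I) + 1 ≤ ringKrullDim (A ⧸ P) := by
  obtain ⟨x, hxI, hxP⟩ := SetLike.exists_of_lt h
  exact ringKrullDim_succ_le_of_surjective (Ideal.Quotient.factor h.le)
    (Ideal.Quotient.factor_surjective h.le)
    (mem_nonZeroDivisors_of_ne_zero (mt Ideal.Quotient.eq_zero_iff_mem.mp hxP))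
    (Ideal.Quotient.eq_zero_iff_mem.mpr hxI)

theorem exists_isPrime_le_ringKrullDim_quotient {n : ℕ} (h : n ≤ ringKrullDim A) :
    ∃ P : Ideal A, P.IsPrime ∧ n ≤ ringKrullDim (A ⧸ P) := by
  obtain ⟨l, hl⟩ := Order.le_krullDim_iff.mp h
  refine ⟨l.head.asIdeal, l.head.2, ?_⟩
  rw [ringKrullDim_quotient, Order.le_krullDim_iff]
  exact ⟨⟨l.length, fun i => ⟨l i, l.head_le i⟩, l.step⟩, hl⟩

theorem ringKrullDim_quotient_le_supportDim {M : Type*} [AddCommGroup M] [Module A M]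
    {P : Ideal A} [hP : P.IsPrime] (h : ⟨P, hP⟩ ∈ Module.support A M) :
    ringKrullDim (A ⧸ P) ≤ Module.supportDim A M := by
  rw [ringKrullDim_quotient]
  exact Order.krullDim_le_of_strictMono
    (fun Q => ⟨Q.1, Module.mem_support_mono (fun _ ha => Q.2 ha) h⟩) fun _ _ => id

variable [IsLocalRing A] [IsNoetherianRing A]

theorem supportDim_le_quotient_ofList_smul_add_length {M : Type*} [AddCommGroup M] [Module A M]
    [Module.Finite A M] (ys : List A) (hys : ∀ y ∈ ys, y ∈ IsLocalRing.maximalIdeal A) :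
    Module.supportDim A M ≤
      Module.supportDim A (M ⧸ (Ideal.ofList ys • ⊤ : Submodule A M)) + ys.length := by
  induction ys generalizing M with
  | nil =>
    rw [Module.supportDim_eq_of_equiv (Submodule.quotEquivOfEqBot _ (by simp))]
    simp
  | cons y ys ih =>
    rw [List.forall_mem_cons] at hys
    rw [Module.supportDim_eq_of_equiv
      (Submodule.quotOfListConsSMulTopEquivQuotSMulTopInner M y ys)]
    refine (Module.supportDim_le_supportDim_quotSMulTop_succ hys.1).trans
      ((add_le_add_left (ih hys.2) 1).trans_eq ?_)
    rw [add_assoc, List.length_cons, Nat.cast_add, Nat.cast_one]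

end KrullDimension

section Depth

open RingTheory.Sequence IsLocalRing CategoryTheory

/-- The depth of the module `M` over the local ring `A` is at least `k`: the maximal ideal of `A`
contains an `M`-regular sequence of length `k`. -/
def DepthGE (A : Type*) [CommRing A] [IsLocalRing A] (k : ℕ) (M : Type*) [AddCommGroup M]
    [Module A M] : Prop :=
  ∃ rs : List A, rs.length = k ∧ (∀ r ∈ rs, r ∈ maximalIdeal A) ∧ IsRegular M rs

section Module

variable {A : Type*} [CommRing A] [IsLocalRing A] {M M' : Type*} [AddCommGroup M] [Module A M]
  [AddCommGroup M'] [Module A M'] {k : ℕ}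

theorem DepthGE.nontrivial (h : DepthGE A k M) : Nontrivial M :=
  let ⟨_, _, _, hreg⟩ := h
  hreg.nontrivial

theorem DepthGE.congr (h : DepthGE A k M) (e : M ≃ₗ[A] M') : DepthGE A k M' :=
  let ⟨rs, hlen, hmem, hreg⟩ := h
  ⟨rs, hlen, hmem, (e.isRegular_congr rs).mp hreg⟩

theorem depthGE_zero [Nontrivial M] : DepthGE A 0 M :=
  ⟨[], rfl, by simp, IsRegular.nil A M⟩

theorem DepthGE.of_quotSMulTop {x : A} (hx : x ∈ maximalIdeal A) (hreg : IsSMulRegular M x)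
    (h : DepthGE A k (QuotSMulTop x M)) : DepthGE A (k + 1) M := by
  obtain ⟨rs, hlen, hmem, hrs⟩ := h
  exact ⟨x :: rs, by rw [List.length_cons, hlen], List.forall_mem_cons.mpr ⟨hx, hmem⟩,
    (isRegular_cons_iff M x rs).mpr ⟨hreg, hrs⟩⟩

theorem DepthGE.exists_quotSMulTop (h : DepthGE A (k + 1) M) :
    ∃ x ∈ maximalIdeal A, IsSMulRegular M x ∧ DepthGE A k (QuotSMulTop x M) := by
  obtain ⟨_ | ⟨x, rs⟩, hlen, hmem, hrs⟩ := h
  · simp at hlen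
  · rw [List.forall_mem_cons] at hmem
    rw [isRegular_cons_iff] at hrs
    exact ⟨x, hmem.1, hrs.1, rs, by simpa using hlen, hmem.2, hrs.2⟩

theorem maximalIdeal_smul_top_lt [Module.Finite A M] [Nontrivial M] :
    maximalIdeal A • (⊤ : Submodule A M) < ⊤ :=
  lt_top_iff_ne_top.mpr fun h => top_ne_bot <|
    Submodule.eq_bot_of_le_smul_of_le_jacobson_bot (maximalIdeal A) ⊤ Module.Finite.fg_top h.ge
      (maximalIdeal_le_jacobson _)

end Module

universe u v

variable {A : Type u} [CommRing A] [IsLocalRing A] [IsNoetherianRing A] {M : Type v}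
  [AddCommGroup M] [Module A M] [Module.Finite A M] {k : ℕ}

theorem depthGE_iff_subsingleton_ext [Small.{v} A] [Nontrivial M] :
    DepthGE A k M ↔ ∀ i < k, Subsingleton
      (Abelian.Ext (.of A (Shrink.{v} (A ⧸ maximalIdeal A))) (ModuleCat.of A M) i) :=
  (ModuleCat.exists_isRegular_tfae (maximalIdeal A) k (ModuleCat.of A M)
    maximalIdeal_smul_top_lt).out 3 1

-- The depth is detected by `Ext`, so any regular element may start a maximal regular sequence.
theorem DepthGE.quotSMulTop [Small.{v} A] (h : DepthGE A (k + 1) M) {x : A}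
    (hx : x ∈ maximalIdeal A) (hreg : IsSMulRegular M x) : DepthGE A k (QuotSMulTop x M) := by
  have := h.nontrivial
  have := nontrivial_quotSMulTop_of_mem_maximalIdeal M hx
  rw [depthGE_iff_subsingleton_ext] at h ⊢
  intro i hi
  have zero_left := AddCommGrpCat.isZero_of_iff_subsingleton.mpr (h i (by lia))
  have zero_right := AddCommGrpCat.isZero_of_iff_subsingleton.mpr (h (i + 1) (by lia))
  have exact₃ := Abelian.Ext.covariant_sequence_exact₃'
    (ModuleCat.of A (Shrink.{v} (A ⧸ maximalIdeal A)))
    (IsSMulRegular.smulShortComplex_shortExact (M := ModuleCat.of A M) hreg) i (i + 1) rfl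
  exact AddCommGrpCat.subsingleton_of_isZero <| exact₃.isZero_of_both_zeros
    (zero_left.eq_zero_of_src _) (zero_right.eq_zero_of_tgt _)

end Depth

section AssociatedPrimes

open RingTheory.Sequence IsLocalRing
open scoped Pointwise

theorem exists_mem_associatedPrimes_of_not_isSMulRegular {A : Type*} [CommRing A]
    [IsNoetherianRing A] {M : Type*} [AddCommGroup M] [Module A M] {x : A}
    (h : ¬ IsSMulRegular M x) : ∃ p ∈ associatedPrimes A M, x ∈ p := by
  have hmem : x ∈ {a : A | IsSMulRegular M a}ᶜ := h
  rw [← biUnion_associatedPrimes_eq_compl_regular] at hmem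
  simpa using hmem

universe u v

variable {A : Type u} [CommRing A] [IsLocalRing A] [IsNoetherianRing A] {M : Type v}
  [AddCommGroup M] [Module A M] [Module.Finite A M] {k : ℕ} {x : A}

theorem exists_mem_torsionBySet_notMem_smul_top (hx : x ∈ maximalIdeal A)
    (hreg : IsSMulRegular M x) {s : Set A} (hs : Submodule.torsionBySet A M s ≠ ⊥) :
    ∃ v ∈ Submodule.torsionBySet A M s, v ∉ x • (⊤ : Submodule A M) := by
  by_contra! hle
  refine hs (Submodule.eq_bot_of_le_smul_of_le_jacobson_bot (maximalIdeal A) _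
    (IsNoetherian.noetherian _) (fun v hv => ?_) (maximalIdeal_le_jacobson _))
  obtain ⟨w, -, rfl⟩ := hle v hv
  refine Submodule.smul_mem_smul hx ((Submodule.mem_torsionBySet_iff _ _).mpr fun a => hreg ?_)
  have hax : (a : A) • x • w = 0 := (Submodule.mem_torsionBySet_iff _ _).mp hv a
  simpa only [smul_zero, smul_comm x] using hax

theorem exists_mem_associatedPrimes_quotSMulTop (hx : x ∈ maximalIdeal A)
    (hreg : IsSMulRegular M x) {p : Ideal A} (hp : p ∈ associatedPrimes A M) :
    ∃ q ∈ associatedPrimes A (QuotSMulTop x M), p ≤ q ∧ x ∈ q := by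
  obtain ⟨hprime, u, rfl⟩ := isAssociatedPrime_iff.mp hp
  have htors : Submodule.torsionBySet A M ((⊥ : Submodule A M).colon {u}) ≠ ⊥ := by
    refine fun h => hprime.ne_top ?_
    have hu : u = 0 := by
      rw [← Submodule.mem_bot A, ← h, Submodule.mem_torsionBySet_iff]
      exact fun a => (Submodule.mem_bot A).mp (Submodule.mem_colon_singleton.mp a.2)
    simp [hu, Ideal.eq_top_iff_one, Submodule.mem_colon_singleton]
  obtain ⟨v, hv, hvx⟩ := exists_mem_torsionBySet_notMem_smul_top hx hreg htors
  obtain ⟨q, hq, hle⟩ := exists_le_isAssociatedPrime_of_isNoetherianRing A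
    (Submodule.Quotient.mk v : QuotSMulTop x M) (mt (Submodule.Quotient.mk_eq_zero _).mp hvx)
  refine ⟨q, hq, fun a ha => hle ?_, hle ?_⟩ <;>
    rw [Submodule.mem_colon_singleton, Submodule.mem_bot, ← Submodule.Quotient.mk_smul,
      Submodule.Quotient.mk_eq_zero]
  · rw [(Submodule.mem_torsionBySet_iff _ _).mp hv ⟨a, ha⟩]
    exact zero_mem _
  · exact Submodule.smul_mem_pointwise_smul _ _ _ trivial

theorem DepthGE.le_ringKrullDim_quotient (h : DepthGE A k M) {p : Ideal A}
    (hp : p ∈ associatedPrimes A M) : k ≤ ringKrullDim (A ⧸ p) := by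
  have hprime : p.IsPrime := hp.1
  induction k generalizing M p with
  | zero => exact ringKrullDim_nonneg_of_nontrivial
  | succ k ih =>
    obtain ⟨x, hx, hreg, hquot⟩ := h.exists_quotSMulTop
    obtain ⟨q, hq, hpq, hxq⟩ := exists_mem_associatedPrimes_quotSMulTop hx hreg hp
    have hxp : x ∉ p := fun hxp => by
      have hmem := Set.mem_biUnion hp hxp
      rw [biUnion_associatedPrimes_eq_compl_regular] at hmem
      exact hmem hreg
    calc ((k + 1 : ℕ) : WithBot ℕ∞) = k + 1 := by rw [Nat.cast_add, Nat.cast_one]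
      _ ≤ ringKrullDim (A ⧸ q) + 1 := add_le_add_left (ih hquot hq hq.1) 1
      _ ≤ ringKrullDim (A ⧸ p) :=
        ringKrullDim_quotient_add_one_le_of_lt (hpq.lt_of_not_ge fun hqp => hxp (hqp hxq))

theorem DepthGE.isSMulRegular_of_supportDim_le (h : DepthGE A (k + 1) M)
    (hdim : Module.supportDim A (QuotSMulTop x M) ≤ k) : IsSMulRegular M x := by
  by_contra hreg
  obtain ⟨p, hp, hxp⟩ := exists_mem_associatedPrimes_of_not_isSMulRegular hreg
  have hprime : p.IsPrime := hp.1
  have hsupp : ⟨p, hprime⟩ ∈ Module.support A (QuotSMulTop x M) := by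
    rw [Module.support_quotSMulTop]
    refine ⟨Module.mem_support_iff_of_finite.mpr ?_, by simpa using hxp⟩
    rw [← Submodule.annihilator_top]
    exact hp.annihilator_le
  have hle := (h.le_ringKrullDim_quotient hp).trans
    ((ringKrullDim_quotient_le_supportDim hsupp).trans hdim)
  exact Nat.not_succ_le_self k (by exact_mod_cast hle)

theorem DepthGE.quotient_ofList_smul [Small.{v} A] (ys : List A)
    (hys : ∀ y ∈ ys, y ∈ maximalIdeal A) (h : DepthGE A (k + ys.length) M)
    (hdim : Module.supportDim A (M ⧸ (Ideal.ofList ys • ⊤ : Submodule A M)) ≤ k) :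
    DepthGE A k (M ⧸ (Ideal.ofList ys • ⊤ : Submodule A M)) := by
  induction ys generalizing M with
  | nil => exact h.congr (Submodule.quotEquivOfEqBot _ (by simp)).symm
  | cons y ys ih =>
    rw [List.forall_mem_cons] at hys
    have e := Submodule.quotOfListConsSMulTopEquivQuotSMulTopInner M y ys
    rw [Module.supportDim_eq_of_equiv e] at hdim
    have hdim_y : Module.supportDim A (QuotSMulTop y M) ≤ (k + ys.length : ℕ) := by
      rw [Nat.cast_add]
      exact (supportDim_le_quotient_ofList_smul_add_length ys hys.2).trans
        (add_le_add_left hdim _)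
    have hreg := DepthGE.isSMulRegular_of_supportDim_le h hdim_y
    exact (ih hys.2 (DepthGE.quotSMulTop h hys.1 hreg) hdim).congr e.symm

theorem DepthGE.exists_mem_isSMulRegular (h : DepthGE A k M) {I : Ideal A}
    (hI : ∀ q : Ideal A, q.IsPrime → I ≤ q → ringKrullDim (A ⧸ q) < k) :
    ∃ x ∈ I, IsSMulRegular M x := by
  by_contra! hcon
  have hsub : (I : Set A) ⊆ ⋃ p ∈ associatedPrimes A M, (p : Set A) := by
    rw [biUnion_associatedPrimes_eq_compl_regular]
    exact hcon
  obtain ⟨p, hp, hIp⟩ := (Ideal.subset_union_prime_finite (associatedPrimes.finite A M) 0 0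
    fun p hp _ _ => hp.1).mp hsub
  exact (hI p hp.1 hIp).not_ge (h.le_ringKrullDim_quotient hp)

theorem DepthGE.exists_isWeaklyRegular [Small.{v} A] (h : DepthGE A k M) {I : Ideal A}
    (hI : I ≤ maximalIdeal A) {j : ℕ}
    (hdim : ∀ q : Ideal A, q.IsPrime → I ≤ q → ringKrullDim (A ⧸ q) + j ≤ k) :
    ∃ rs : List A, rs.length = j ∧ (∀ r ∈ rs, r ∈ I) ∧ IsWeaklyRegular M rs := by
  induction j generalizing k M with
  | zero => exact ⟨[], rfl, by simp, IsWeaklyRegular.nil A M⟩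
  | succ j ih =>
    obtain _ | k := k
    · refine absurd (hdim _ inferInstance hI) (not_le.mpr ?_)
      exact (Nat.cast_lt.mpr j.succ_pos).trans_le
        (le_add_of_nonneg_left ringKrullDim_nonneg_of_nontrivial)
    have hdim' (q : Ideal A) (hq : q.IsPrime) (hIq : I ≤ q) : ringKrullDim (A ⧸ q) + j ≤ k :=
      ENat.WithBot.add_le_add_one_right_iff.mp (by simpa [add_assoc] using hdim q hq hIq)
    obtain ⟨x, hxI, hreg⟩ := h.exists_mem_isSMulRegular fun q hq hIq =>
      ((le_add_of_nonneg_right (Nat.cast_nonneg j)).trans (hdim' q hq hIq)).trans_lt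
        (Nat.cast_lt.mpr k.lt_succ_self)
    obtain ⟨rs, hlen, hmem, hrs⟩ := ih (h.quotSMulTop (hI hxI) hreg) hdim'
    exact ⟨x :: rs, by rw [List.length_cons, hlen], List.forall_mem_cons.mpr ⟨hxI, hmem⟩,
      (isWeaklyRegular_cons_iff M x rs).mpr ⟨hreg, hrs⟩⟩

end AssociatedPrimes

section Hartshorne

open RingTheory.Sequence IsLocalRing
open scoped Pointwise

theorem exists_le_of_sInf_le {R : Type*} [CommRing R] {s : Set (Ideal R)} (hs : s.Finite)
    {P : Ideal R} [hP : P.IsPrime] (h : sInf s ≤ P) : ∃ Q ∈ s, Q ≤ P := by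
  rw [← hs.coe_toFinset, ← Finset.inf_id_eq_sInf, Ideal.IsPrime.inf_le' hP] at h
  simpa using h

variable {A : Type*} [CommRing A] [IsLocalRing A]

theorem eq_zero_or_eq_zero_of_mul_eq_zero_of_add_dvd {a b : A} (hab : a * b = 0)
    (hreg : IsSMulRegular A (a + b)) (hdvd : a + b ∣ a) : a = 0 ∨ b = 0 := by
  obtain ⟨e, he⟩ := hdvd
  have hb : b = (a + b) * (1 - e) := by linear_combination -he
  have hidem : e * (1 - e) = 0 := hreg <| hreg <| by
    simp only [smul_eq_mul]
    linear_combination hab - (a + b) * (1 - e) * he - a * hb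
  obtain hunit | hunit := isUnit_or_isUnit_one_sub_self e
  · right
    rw [hb, hunit.mul_right_eq_zero.mp hidem, mul_zero]
  · left
    rw [he, hunit.mul_left_eq_zero.mp hidem, mul_zero]

theorem eq_bot_or_eq_bot_of_isWeaklyRegular_pair {I J : Ideal A} (hIJ : I * J = ⊥) {x y : A}
    (hx : x ∈ I ⊔ J) (hy : y ∈ I ⊔ J) (hreg : IsWeaklyRegular A [x, y]) : I = ⊥ ∨ J = ⊥ := by
  rw [isWeaklyRegular_cons_iff, isWeaklyRegular_singleton_iff] at hreg
  obtain ⟨hregx, hregy⟩ := hreg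
  have hmul {s t : A} (hs : s ∈ I) (ht : t ∈ J) : s * t = 0 := by
    rw [← Ideal.mem_bot, ← hIJ]
    exact Ideal.mul_mem_mul hs ht
  obtain ⟨a, ha, b, hb, rfl⟩ := Submodule.mem_sup.mp hx
  obtain ⟨a', ha', b', hb', rfl⟩ := Submodule.mem_sup.mp hy
  have hdvd : a + b ∣ a := by
    have hmem : a ∈ (a + b) • (⊤ : Ideal A) := by
      refine isSMulRegular_quotient_iff_mem_of_smul_mem _ _ |>.mp hregy a ?_
      refine (Submodule.mem_smul_pointwise_iff_exists _ _ _).mpr ⟨a', trivial, ?_⟩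
      simp only [smul_eq_mul]
      linear_combination hmul ha' hb - hmul ha hb'
    obtain ⟨w, -, hw⟩ := (Submodule.mem_smul_pointwise_iff_exists _ _ _).mp hmem
    exact ⟨w, hw.symm⟩
  refine (eq_zero_or_eq_zero_of_mul_eq_zero_of_add_dvd (hmul ha hb) hregx hdvd).imp
    (fun h0 => (Submodule.eq_bot_iff _).mpr fun s hs => hregx ?_)
    (fun h0 => (Submodule.eq_bot_iff _).mpr fun t ht => hregx ?_)
  · simp [h0, mul_comm b, hmul hs hb]
  · simp [h0, hmul ha ht]

theorem le_or_le_of_isWeaklyRegular_pair {F I J : Ideal A} (hIJ : I * J ≤ F) {x y : A}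
    (hx : x ∈ I ⊔ J) (hy : y ∈ I ⊔ J) (hreg : IsWeaklyRegular (A ⧸ F) [x, y]) :
    I ≤ F ∨ J ≤ F := by
  obtain hF | hF := subsingleton_or_nontrivial (A ⧸ F)
  · rw [Ideal.Quotient.subsingleton_iff.mp hF]
    exact .inl le_top
  have hlocal : IsLocalRing (A ⧸ F) := .of_surjective' _ Ideal.Quotient.mk_surjective
  have hmap {K : Ideal A} : K.map (Ideal.Quotient.mk F) = ⊥ ↔ K ≤ F := by
    rw [Ideal.map_eq_bot_iff_le_ker, Ideal.mk_ker]
  simp only [← hmap] at hIJ ⊢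
  rw [Ideal.map_mul] at hIJ
  rw [← isWeaklyRegular_map_algebraMap_iff (A ⧸ F)] at hreg
  refine eq_bot_or_eq_bot_of_isWeaklyRegular_pair hIJ ?_ ?_ hreg <;> rw [← Ideal.map_sup]
  exacts [Ideal.mem_map_of_mem _ hx, Ideal.mem_map_of_mem _ hy]

variable [IsNoetherianRing A] {k : ℕ}

theorem DepthGE.le_or_le_of_mul_le {F I J : Ideal A} (h : DepthGE A k (A ⧸ F)) (hIJ : I * J ≤ F)
    (hdim : ∀ q : Ideal A, q.IsPrime → I ⊔ J ≤ q → ringKrullDim (A ⧸ q) + 2 ≤ k) :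
    I ≤ F ∨ J ≤ F := by
  by_cases hI : I = ⊤
  · exact .inr (by simpa [hI] using hIJ)
  by_cases hJ : J = ⊤
  · exact .inl (by simpa [hJ] using hIJ)
  obtain ⟨rs, hlen, hmem, hreg⟩ := h.exists_isWeaklyRegular (j := 2)
    (sup_le (le_maximalIdeal hI) (le_maximalIdeal hJ)) hdim
  obtain ⟨x, y, rfl⟩ := List.length_eq_two.mp hlen
  exact le_or_le_of_isWeaklyRegular_pair hIJ (hmem x (by simp)) (hmem y (by simp)) hreg

theorem DepthGE.isPrime_radical {F : Ideal A} (h : DepthGE A k (A ⧸ F))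
    (hdim : ∀ P ∈ F.minimalPrimes, ∀ Q ∈ F.minimalPrimes, P ≠ Q →
      ∀ q : Ideal A, q.IsPrime → P ⊔ Q ≤ q → ringKrullDim (A ⧸ q) + 2 ≤ k) :
    F.radical.IsPrime := by
  have hF : F ≠ ⊤ := Ideal.Quotient.nontrivial_iff.mp h.nontrivial
  obtain ⟨P, hP⟩ := Ideal.nonempty_minimalPrimes hF
  have hprime : P.IsPrime := hP.1.1
  have hfin : (F.minimalPrimes \ {P}).Finite :=
    (Ideal.finite_minimalPrimes_of_isNoetherianRing A F).subset Set.sdiff_subset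
  set J := sInf (F.minimalPrimes \ {P})
  have hrad : P * J ≤ F.radical := by
    rw [← Ideal.sInf_minimalPrimes]
    refine le_sInf fun Q hQ => ?_
    by_cases hQP : Q = P
    · exact hQP ▸ Ideal.mul_le_left
    · exact Ideal.mul_le_right.trans (sInf_le ⟨hQ, hQP⟩)
  obtain ⟨t, ht⟩ := Ideal.exists_pow_le_of_le_radical_of_fg hrad (IsNoetherian.noetherian _)
  rw [mul_pow] at ht
  obtain hPF | hJF := h.le_or_le_of_mul_le ht fun q hq hle => by
    obtain ⟨hPq, hJq⟩ := sup_le_iff.mp hle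
    obtain ⟨Q, hQ, hQq⟩ := exists_le_of_sInf_le hfin (hq.le_of_pow_le hJq)
    exact hdim P hP Q hQ.1 (Ne.symm hQ.2) q hq (sup_le (hq.le_of_pow_le hPq) hQq)
  · have hradP : F.radical = P :=
      le_antisymm (hprime.radical_le_iff.mpr hP.1.2) fun a ha => ⟨t, hPF (Ideal.pow_mem_pow ha t)⟩
    exact hradP ▸ hprime
  · obtain ⟨Q, hQ, hQP⟩ := exists_le_of_sInf_le hfin (hprime.le_of_pow_le (hJF.trans hP.1.2))
    exact absurd (hQP.antisymm (hP.2 hQ.1.1 hQP)) hQ.2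

end Hartshorne

section RegularLocalRing

open IsLocalRing
open scoped Pointwise

section Cotangent

variable {A : Type*} [CommRing A] [IsLocalRing A] [IsNoetherianRing A]
  {κ : Type*} [Fintype κ] {f : κ → maximalIdeal A}

theorem exists_span_union_eq_top_of_linearIndependent
    (hf : LinearIndependent (ResidueField A) fun i => (maximalIdeal A).toCotangent (f i)) :
    ∃ s : Set (maximalIdeal A), s.Finite ∧
      s.ncard + Fintype.card κ = (maximalIdeal A).spanFinrank ∧
        Submodule.span A (s ∪ Set.range f) = ⊤ := by
  set v := fun i => (maximalIdeal A).toCotangent (f i)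
  set b := hf.linearIndepOn_id.extend (Set.subset_univ (Set.range v))
  let B : Module.Basis b (ResidueField A) (CotangentSpace A) := .extend hf.linearIndepOn_id
  have hvb : Set.range v ⊆ b := hf.linearIndepOn_id.subset_extend _
  have hb : b.Finite := Module.Finite.finite_basis B
  obtain ⟨g, hg⟩ := (maximalIdeal A).toCotangent_surjective.hasRightInverse
  refine ⟨g '' (b \ Set.range v), (hb.sdiff).image g, ?_, ?_⟩
  · rw [Set.ncard_image_of_injective _ hg.injective, ← Nat.card_eq_fintype_card,
      ← Set.ncard_range_of_injective hf.injective, Set.ncard_sdiff_add_ncard_of_subset hvb hb,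
      spanFinrank_maximalIdeal_eq_finrank_cotangentSpace, Module.finrank_eq_nat_card_basis B,
      Nat.card_coe_set_eq]
  · rw [← CotangentSpace.span_image_eq_top_iff, Set.image_union, ← Set.image_comp,
      hg.comp_eq_id, Set.image_id, ← Set.range_comp]
    change Submodule.span _ (b \ Set.range v ∪ Set.range v) = ⊤
    rw [Set.sdiff_union_of_subset hvb, ← B.span_eq, Module.Basis.range_extend]

theorem spanFinrank_maximalIdeal_add_card_le {B : Type*} [CommRing B] [IsLocalRing B]
    {φ : A →+* B} (hφ : Function.Surjective φ) (h0 : ∀ i, φ (f i) = 0)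
    (hf : LinearIndependent (ResidueField A) fun i => (maximalIdeal A).toCotangent (f i)) :
    (maximalIdeal B).spanFinrank + Fintype.card κ ≤ (maximalIdeal A).spanFinrank := by
  obtain ⟨s, hs, hcard, hspan⟩ := exists_span_union_eq_top_of_linearIndependent hf
  have himage := congrArg (Submodule.map (maximalIdeal A).subtype) hspan
  rw [Submodule.map_top, Submodule.range_subtype, Submodule.map_span, Set.image_union,
    ← Set.range_comp] at himage
  have hmap : maximalIdeal B = Ideal.span ((fun a : maximalIdeal A => φ a) '' s) := by
    have hf0 : φ '' Set.range (fun i => (f i : A)) ⊆ {0} := by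
      rintro _ ⟨_, ⟨i, rfl⟩, rfl⟩
      exact h0 i
    calc maximalIdeal B = (maximalIdeal A).map φ := (map_maximalIdeal_of_surjective φ hφ).symm
      _ = Ideal.span (φ '' (Subtype.val '' s ∪ Set.range fun i => (f i : A))) := by
        rw [← Ideal.map_span]
        exact congrArg (Ideal.map φ) himage.symm
      _ = Ideal.span ((fun a : maximalIdeal A => φ a) '' s) := by
        rw [Set.image_union, Ideal.span_union, Ideal.span_eq_bot.mpr hf0, sup_bot_eq,
          Set.image_image]
  rw [← hcard, hmap]
  grw [Submodule.spanFinrank_span_le_ncard_of_finite (hs.image _), Set.ncard_image_le hs]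

end Cotangent

section Quotient

variable {A : Type*} [CommRing A] [IsRegularLocalRing A]

theorem isRegularLocalRing_quotient_and_ringKrullDim_add_card {κ : Type*} [Fintype κ]
    {f : κ → maximalIdeal A}
    (hf : LinearIndependent (ResidueField A) fun i => (maximalIdeal A).toCotangent (f i)) :
    IsRegularLocalRing (A ⧸ Ideal.span (Set.range fun i => (f i : A))) ∧
      ringKrullDim (A ⧸ Ideal.span (Set.range fun i => (f i : A))) + Fintype.card κ =
        ringKrullDim A := by
  set I := Ideal.span (Set.range fun i => (f i : A))
  have hI : I ≤ maximalIdeal A := Ideal.span_le.mpr (Set.range_subset_iff.mpr fun i => (f i).2)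
  have : Nontrivial (A ⧸ I) := Ideal.Quotient.nontrivial_iff.mpr (ne_top_of_le_ne_top
    (maximalIdeal.isMaximal A).ne_top hI)
  have : IsLocalRing (A ⧸ I) := .of_surjective' _ Ideal.Quotient.mk_surjective
  have hspan := spanFinrank_maximalIdeal_add_card_le (Ideal.Quotient.mk_surjective (I := I))
    (fun i => Ideal.Quotient.eq_zero_iff_mem.mpr (Ideal.subset_span ⟨i, rfl⟩)) hf
  have hspan' : ((maximalIdeal (A ⧸ I)).spanFinrank : WithBot ℕ∞) + Fintype.card κ ≤
      ringKrullDim A := by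
    rw [← IsRegularLocalRing.spanFinrank_maximalIdeal]
    exact_mod_cast hspan
  have hinj : Function.Injective fun i => (f i : A) :=
    Subtype.val_injective.comp hf.injective.of_comp
  have hdim : ringKrullDim A ≤ ringKrullDim (A ⧸ I) + Fintype.card κ := by
    have h := ringKrullDim_le_ringKrullDim_quotient_add_encard (Set.range fun i => (f i : A))
      ((Ideal.span_le.mp hI).trans (ringJacobson_eq_maximalIdeal A).ge)
    have hcard : (Set.range fun i => (f i : A)).encard = Fintype.card κ := by
      rw [← Set.image_univ, hinj.encard_image, Set.encard_univ, ENat.card_eq_coe_fintype_card]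
    rwa [hcard] at h
  refine ⟨.of_spanFinrank_maximalIdeal_le _ ?_, ?_⟩
  · exact ENat.WithBot.add_le_add_natCast_right_iff.mp (hspan'.trans hdim)
  · refine le_antisymm ?_ hdim
    grw [ringKrullDim_le_spanFinrank_maximalIdeal, hspan']

theorem exists_isRegularLocalRing_quotient_span_singleton {n : ℕ}
    (hn : ringKrullDim A = (n + 1 : ℕ)) :
    ∃ x ∈ maximalIdeal A, IsRegularLocalRing (A ⧸ Ideal.span {x}) ∧
      ringKrullDim (A ⧸ Ideal.span {x}) = n := by
  have hpos : 0 < Module.finrank (ResidueField A) (CotangentSpace A) := by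
    have h := (IsRegularLocalRing.iff_finrank_cotangentSpace A).mp inferInstance
    rw [hn, Nat.cast_inj] at h
    exact h ▸ n.succ_pos
  have := Module.nontrivial_of_finrank_pos hpos
  obtain ⟨v, hv⟩ := exists_ne (0 : CotangentSpace A)
  obtain ⟨x, rfl⟩ := (maximalIdeal A).toCotangent_surjective v
  have h := isRegularLocalRing_quotient_and_ringKrullDim_add_card (κ := Unit) (f := fun _ => x)
    (linearIndependent_unique_iff.mpr hv)
  rw [Set.range_const, Fintype.card_unit, hn, Nat.cast_add] at h
  exact ⟨x, x.2, h.1, ENat.WithBot.add_le_add_natCast_right_iff.mp h.2.le |>.antisymm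
    (ENat.WithBot.add_le_add_natCast_right_iff.mp h.2.ge)⟩

end Quotient

theorem supportDim_quotSMulTop_quotient {A : Type*} [CommRing A] (x : A) (I : Ideal A) :
    Module.supportDim A (QuotSMulTop x (A ⧸ I)) = ringKrullDim (A ⧸ I ⊔ Ideal.span {x}) := by
  rw [Module.supportDim, Module.support_quotSMulTop, ringKrullDim_quotient,
    PrimeSpectrum.zeroLocus_sup, PrimeSpectrum.zeroLocus_span, Module.support_eq_zeroLocus,
    Ideal.annihilator_quotient]

theorem isDomain_of_isPrime_span_singleton {A : Type*} [CommRing A] [IsLocalRing A]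
    [IsNoetherianRing A] {x : A} {n : ℕ} (hx : x ∈ maximalIdeal A)
    (hprime : (Ideal.span {x}).IsPrime) (hlt : ringKrullDim (A ⧸ Ideal.span {x}) < n)
    (hn : n ≤ ringKrullDim A) : IsDomain A := by
  obtain ⟨p, hp, hpn⟩ := exists_isPrime_le_ringKrullDim_quotient hn
  have hxp : x ∉ p := fun hxp => by
    have h := ringKrullDim_le_of_surjective _ (Ideal.Quotient.factor_surjective
      ((Ideal.span_singleton_le_iff_mem p).mpr hxp))
    exact ((hpn.trans h).trans_lt hlt).false
  have hpx : p ≤ Ideal.span {x} := by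
    by_contra hnle
    have h := Module.supportDim_le_supportDim_quotSMulTop_succ (M := A ⧸ p) hx
    rw [Module.supportDim_quotient_eq_ringKrullDim, supportDim_quotSMulTop_quotient] at h
    have h' := ringKrullDim_quotient_add_one_le_of_lt (right_lt_sup.mpr hnle)
    exact (((hpn.trans h).trans h').trans_lt hlt).false
  have hp0 : p = ⊥ := by
    refine Submodule.eq_bot_of_le_smul_of_le_jacobson_bot (maximalIdeal A) p
      (IsNoetherian.noetherian p) (fun z hz => ?_) (maximalIdeal_le_jacobson _)
    obtain ⟨w, rfl⟩ := Ideal.mem_span_singleton.mp (hpx hz)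
    exact Submodule.smul_mem_smul hx ((hp.mem_or_mem hz).resolve_left hxp)
  have : (⊥ : Ideal A).IsPrime := hp0 ▸ hp
  exact IsDomain.of_bot_isPrime A

theorem isDomain_of_isRegularLocalRing (A : Type*) [CommRing A] [IsRegularLocalRing A] :
    IsDomain A := by
  induction hn : (maximalIdeal A).spanFinrank generalizing A with
  | zero =>
    rw [spanFinrank_maximalIdeal_eq_finrank_cotangentSpace,
      finrank_cotangentSpace_eq_zero_iff] at hn
    exact hn.isDomain
  | succ n ih =>
    have hdim : ringKrullDim A = (n + 1 : ℕ) := by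
      rw [← IsRegularLocalRing.spanFinrank_maximalIdeal, hn]
    obtain ⟨x, hx, _, hxn⟩ := exists_isRegularLocalRing_quotient_span_singleton hdim
    have := ih (A ⧸ Ideal.span {x}) (by
      rw [← Nat.cast_inj (R := WithBot ℕ∞), IsRegularLocalRing.spanFinrank_maximalIdeal, hxn])
    refine isDomain_of_isPrime_span_singleton hx
      ((Ideal.Quotient.isDomain_iff_prime _).mp inferInstance) ?_ hdim.ge
    rw [hxn]
    exact_mod_cast n.lt_succ_self

theorem DepthGE.of_surjective {A B M : Type*} [CommRing A] [IsLocalRing A] [CommRing B]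
    [IsLocalRing B] [Algebra A B] [AddCommGroup M] [Module A M] [Module B M] [IsScalarTower A B M]
    {k : ℕ} (hAB : Function.Surjective (algebraMap A B)) (h : DepthGE B k M) : DepthGE A k M := by
  obtain ⟨rs, hlen, hmem, hreg⟩ := h
  obtain ⟨rs, rfl⟩ := List.map_surjective_iff.mpr hAB rs
  rw [List.forall_mem_map] at hmem
  refine ⟨rs, by simpa using hlen, fun r hr hunit => hmem r hr (hunit.map _), ?_⟩
  refine ((AddEquiv.refl M).isRegular_congr ?_).mp hreg
  exact List.forall₂_map_left_iff.mpr (List.forall₂_same.mpr fun r _ => algebraMap_smul B r)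

theorem DepthGE.of_isRegularLocalRing {A : Type*} [CommRing A] [IsRegularLocalRing A] {n : ℕ}
    (hn : ringKrullDim A = n) : DepthGE A n A := by
  induction n generalizing A with
  | zero => exact depthGE_zero
  | succ n ih =>
    obtain ⟨x, hx, _, hxn⟩ := exists_isRegularLocalRing_quotient_span_singleton hn
    have := isDomain_of_isRegularLocalRing A
    have hx0 : x ≠ 0 := by
      rintro rfl
      rw [Ideal.span_singleton_zero,
        ringKrullDim_eq_of_ringEquiv (RingEquiv.quotientBot A), hn] at hxn
      exact absurd (Nat.cast_inj.mp hxn) n.succ_ne_self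
    have hspan : Ideal.span {x} = x • (⊤ : Ideal A) := by
      simp [← Submodule.ideal_span_singleton_smul]
    refine .of_quotSMulTop hx (.of_ne_zero hx0) (.congr (.of_surjective ?_ (ih hxn))
      (Submodule.quotEquivOfEq _ _ hspan))
    exact Ideal.Quotient.mk_surjective

end RegularLocalRing

section SmoothPoint

open IsLocalRing

variable {K ι κ : Type*} [Field K] {x : ι → K}

theorem mem_vanishingIdeal_singleton {p : MvPolynomial ι K} :
    p ∈ vanishingIdeal K {x} ↔ eval x p = 0 := by
  rw [mem_vanishingIdeal_singleton_iff, aeval_eq_eval]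

theorem eval_pderiv_eq_zero_of_mem_sq {p : MvPolynomial ι K} (hp : p ∈ vanishingIdeal K {x} ^ 2)
    (j : ι) : eval x (pderiv j p) = 0 := by
  rw [pow_two] at hp
  refine Submodule.mul_induction_on hp (fun a ha b hb => ?_) fun a b ha hb => ?_
  · rw [mem_vanishingIdeal_singleton] at ha hb
    simp [Derivation.leibniz, ha, hb]
  · rw [map_add, map_add, ha, hb, add_zero]

theorem algebraMap_mem_maximalIdeal_localization {p : MvPolynomial ι K} (hp : eval x p = 0) :
    algebraMap _ (Localization.AtPrime (vanishingIdeal K {x})) p ∈ maximalIdeal _ :=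
  (IsLocalization.AtPrime.to_map_mem_maximal_iff _ (vanishingIdeal K {x}) p).mpr
    (mem_vanishingIdeal_singleton.mpr hp)

theorem toCotangent_sum_smul {A : Type*} [CommRing A] [IsLocalRing A] (s : Finset κ) (a : κ → A)
    (v : κ → maximalIdeal A) : (maximalIdeal A).toCotangent (∑ i ∈ s, a i • v i) =
      ∑ i ∈ s, residue A (a i) • (maximalIdeal A).toCotangent (v i) := by
  rw [map_sum]
  exact Finset.sum_congr rfl fun i _ => by
    rw [map_smul, ← ResidueField.algebraMap_eq, algebraMap_smul]

theorem linearIndependent_toCotangent {f : κ → MvPolynomial ι K}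
    (hfx : ∀ i, eval x (f i) = 0)
    (hf : LinearIndependent K fun i j => eval x (pderiv j (f i))) :
    LinearIndependent (ResidueField (Localization.AtPrime (vanishingIdeal K {x}))) fun i =>
      (maximalIdeal (Localization.AtPrime (vanishingIdeal K {x}))).toCotangent
        ⟨_, algebraMap_mem_maximalIdeal_localization (hfx i)⟩ := by
  set m := vanishingIdeal K {x}
  set A := Localization.AtPrime m
  rw [linearIndependent_iff']
  intro s c hc
  have hlift (i : κ) : ∃ p : MvPolynomial ι K, residue A (algebraMap _ A p) = c i :=
    Ideal.algebraMap_residueField_surjective m (c i)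
  choose p hp using hlift
  have hsum : ∑ i ∈ s, p i * f i ∈ m ^ 2 := by
    let v (i : κ) : maximalIdeal A :=
      ⟨algebraMap _ A (f i), algebraMap_mem_maximalIdeal_localization (hfx i)⟩
    have hv : ((∑ i ∈ s, algebraMap _ A (p i) • v i : maximalIdeal A) : A) ∈
        maximalIdeal A ^ 2 := by
      rw [← (maximalIdeal A).toCotangent_eq_zero, toCotangent_sum_smul]
      simpa only [hp] using hc
    have hv' : algebraMap _ A (∑ i ∈ s, p i * f i) ∈ maximalIdeal A ^ 2 := by
      convert hv
      simp only [map_sum, map_mul, AddSubmonoidClass.coe_finsetSum, Submodule.coe_smul,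
        smul_eq_mul, v]
    exact (IsLocalization.AtPrime.under_maximalIdeal_pow m A 2).le hv'
  have hgrad : ∑ i ∈ s, eval x (p i) • (fun j => eval x (pderiv j (f i))) = 0 := by
    ext j
    simpa [Derivation.leibniz, hfx, map_sum] using eval_pderiv_eq_zero_of_mem_sq hsum j
  intro i hi
  rw [← hp, residue_eq_zero_iff]
  exact algebraMap_mem_maximalIdeal_localization (linearIndependent_iff'.mp hf s _ hgrad i hi)

theorem ringKrullDim_localization_vanishingIdeal_singleton [Fintype ι] (x : ι → K) :
    ringKrullDim (Localization.AtPrime (vanishingIdeal K {x})) = Fintype.card ι := by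
  classical
  refine le_antisymm ?_ ?_
  · rw [IsLocalization.AtPrime.ringKrullDim_eq_height (vanishingIdeal K {x})]
    refine (Ideal.height_le_ringKrullDim_of_ne_top Ideal.IsPrime.ne_top').trans_eq ?_
    rw [MvPolynomial.ringKrullDim_of_isNoetherianRing, ringKrullDim_eq_zero_of_field, zero_add,
      Nat.card_eq_fintype_card]
  · have hgrad : LinearIndependent K fun i j => eval x (pderiv j (X i - C (x i))) := by
      convert (Pi.basisFun K ι).linearIndependent with i j
      simp [pderiv_X, Pi.single_apply, apply_ite, eq_comm]
    have := (linearIndependent_toCotangent (fun i => by simp) hgrad).fintype_card_le_finrank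
    rw [← (IsRegularLocalRing.iff_finrank_cotangentSpace _).mp inferInstance]
    exact_mod_cast this

theorem isPrime_map_span_range [Finite ι] [Finite κ] {f : κ → MvPolynomial ι K}
    (hfx : ∀ i, eval x (f i) = 0)
    (hf : LinearIndependent K fun i j => eval x (pderiv j (f i))) :
    ((Ideal.span (Set.range f)).map
      (algebraMap _ (Localization.AtPrime (vanishingIdeal K {x})))).IsPrime := by
  cases nonempty_fintype κ
  obtain ⟨hregular, -⟩ := isRegularLocalRing_quotient_and_ringKrullDim_add_card
    (linearIndependent_toCotangent hfx hf)
  have hdomain := @isDomain_of_isRegularLocalRing _ _ hregular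
  rw [Ideal.map_span, ← Set.range_comp]
  exact (Ideal.Quotient.isDomain_iff_prime _).mp hdomain

theorem eq_comap_map_of_mem_minimalPrimes {R A : Type*} [CommRing R] [CommRing A] [Algebra R A]
    (m : Ideal R) [m.IsPrime] [IsLocalization.AtPrime A m] {F p : Ideal R}
    (hF : (F.map (algebraMap R A)).IsPrime) (hp : p ∈ F.minimalPrimes) (hpm : p ≤ m) :
    p = (F.map (algebraMap R A)).comap (algebraMap R A) := by
  have hcomap : (p.map (algebraMap R A)).comap (algebraMap R A) = p :=
    IsLocalization.under_map_of_isPrime_disjoint m.primeCompl _ hp.1.1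
      (Set.disjoint_left.mpr fun a ha hb => ha (hpm hb))
  have hle : (F.map (algebraMap R A)).comap (algebraMap R A) ≤ p :=
    (Ideal.comap_mono (Ideal.map_mono hp.1.2)).trans_eq hcomap
  exact (hp.2 ⟨Ideal.IsPrime.comap _, Ideal.le_comap_map⟩ hle).antisymm hle

theorem eq_of_mem_minimalPrimes_of_linearIndependent [Finite ι] [Finite κ]
    {f : κ → MvPolynomial ι K} (hfx : ∀ i, eval x (f i) = 0)
    (hf : LinearIndependent K fun i j => eval x (pderiv j (f i)))
    {p q : Ideal (MvPolynomial ι K)} (hp : p ∈ (Ideal.span (Set.range f)).minimalPrimes)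
    (hq : q ∈ (Ideal.span (Set.range f)).minimalPrimes)
    (hpx : p ≤ vanishingIdeal K {x}) (hqx : q ≤ vanishingIdeal K {x}) : p = q := by
  have hprime := isPrime_map_span_range hfx hf
  rw [eq_comap_map_of_mem_minimalPrimes _ hprime hp hpx,
    eq_comap_map_of_mem_minimalPrimes _ hprime hq hqx]

end SmoothPoint

section CompleteIntersection

open IsLocalRing

theorem DepthGE.quotient_span_range {A κ : Type*} [CommRing A] [IsRegularLocalRing A] [Fintype κ]
    {k : ℕ} {f : κ → A} (hf : ∀ i, f i ∈ maximalIdeal A)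
    (hA : ringKrullDim A = (k + Fintype.card κ : ℕ))
    (hdim : ringKrullDim (A ⧸ Ideal.span (Set.range f)) ≤ k) :
    DepthGE A k (A ⧸ Ideal.span (Set.range f)) := by
  set ys : List A := Finset.univ.toList.map f
  have hspan : Ideal.ofList ys • (⊤ : Submodule A A) = Ideal.span (Set.range f) := by
    rw [smul_eq_mul, Ideal.mul_top, Ideal.ofList]
    congr 1
    ext
    simp [ys]
  have hlength : k + ys.length = k + Fintype.card κ := by simp [ys]
  refine .congr (.quotient_ofList_smul ys (by simpa [ys] using hf) ?_ ?_)
    (Submodule.quotEquivOfEq _ _ hspan)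
  · rw [hlength]
    exact .of_isRegularLocalRing hA
  · rwa [hspan, Module.supportDim_quotient_eq_ringKrullDim]

end CompleteIntersection

section Cone

section CommSemiring

variable {R ι : Type*} [CommSemiring R]

theorem aeval_smul_of_isHomogeneous {A : Type*} [CommSemiring A] [Algebra R A]
    {p : MvPolynomial ι R} {n : ℕ} (hp : p.IsHomogeneous n) (t : A) (y : ι → A) :
    aeval (t • y) p = t ^ n * aeval y p := by
  rw [aeval_def, aeval_def, eval₂_eq, eval₂_eq, Finset.mul_sum]
  refine Finset.sum_congr rfl fun e he => ?_
  have hdegree : ∑ i ∈ e.support, e i = n := by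
    rw [← hp (mem_support_iff.mp he)]
    simp [Finsupp.weight_apply, Finsupp.sum]
  simp only [Pi.smul_apply, smul_eq_mul, mul_pow, Finset.prod_mul_distrib,
    Finset.prod_pow_eq_pow_sum, hdegree]
  ring

theorem eval_zero_of_isHomogeneous {x : ι → R} {p : MvPolynomial ι R} {n : ℕ}
    (hp : p.IsHomogeneous n) (hx : eval x p = 0) : eval 0 p = 0 := by
  have := aeval_smul_of_isHomogeneous hp (0 : R) x
  rwa [zero_smul, aeval_eq_eval, aeval_eq_eval, hx, mul_zero] at this

/-- The restriction of polynomial functions to the line `t ↦ t • x` through the origin. -/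
def lineRestriction (x : ι → R) : MvPolynomial ι R →ₐ[R] Polynomial R :=
  aeval ((Polynomial.X : Polynomial R) • (algebraMap R (Polynomial R) ∘ x))

theorem eval_lineRestriction (x : ι → R) (t : R) (p : MvPolynomial ι R) :
    (lineRestriction x p).eval t = eval (t • x) p := by
  have hcomp : (Polynomial.aeval t).comp (lineRestriction x) = aeval (t • x) := by
    ext i
    simp [lineRestriction, mul_comm t]
  simpa [aeval_eq_eval] using DFunLike.congr_fun hcomp p

theorem lineRestriction_of_isHomogeneous {p : MvPolynomial ι R} {n : ℕ} (hp : p.IsHomogeneous n)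
    (x : ι → R) : lineRestriction x p = Polynomial.X ^ n * Polynomial.C (eval x p) := by
  rw [lineRestriction, aeval_smul_of_isHomogeneous hp, aeval_algebraMap_apply, aeval_eq_eval]
  rfl

end CommSemiring

variable {K ι κ : Type*} [Field K] {f : κ → MvPolynomial ι K} {d : κ → ℕ}

theorem eval_eq_zero_of_mul_mem_span_range (hhom : ∀ i, (f i).IsHomogeneous (d i)) {x : ι → K}
    (hx : ∀ i, eval x (f i) = 0) {s g : MvPolynomial ι K} (hs : eval 0 s ≠ 0)
    (hsg : s * g ∈ Ideal.span (Set.range f)) : eval x g = 0 := by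
  have hF : Ideal.span (Set.range f) ≤ RingHom.ker (lineRestriction x) := by
    rw [Ideal.span_le]
    rintro _ ⟨i, rfl⟩
    rw [SetLike.mem_coe, RingHom.mem_ker, lineRestriction_of_isHomogeneous (hhom i), hx i,
      map_zero, mul_zero]
  have hs' : lineRestriction x s ≠ 0 := by
    intro h
    rw [← zero_smul K x, ← eval_lineRestriction, h, Polynomial.eval_zero] at hs
    exact hs rfl
  have hmul : lineRestriction x s * lineRestriction x g = 0 := by
    rw [← map_mul]
    exact hF hsg
  rw [← one_smul K x, ← eval_lineRestriction, (mul_eq_zero.mp hmul).resolve_left hs',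
    Polynomial.eval_zero]

theorem zeroLocus_span_range (f : κ → MvPolynomial ι K) :
    zeroLocus K (Ideal.span (Set.range f)) = {x | ∀ i, eval x (f i) = 0} := by
  ext x
  simp [zeroLocus_span, aeval_eq_eval]

theorem comap_radical_map_span_range [IsAlgClosed K] [Finite ι]
    (hhom : ∀ i, (f i).IsHomogeneous (d i)) (A : Type*) [CommRing A] [Algebra (MvPolynomial ι K) A]
    [IsLocalization.AtPrime A (vanishingIdeal K {(0 : ι → K)})] :
    ((Ideal.span (Set.range f)).map (algebraMap _ A)).radical.comap (algebraMap _ A) =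
      (Ideal.span (Set.range f)).radical := by
  rw [Ideal.comap_radical]
  refine le_antisymm (Ideal.radical_le_radical_iff.mpr fun g hg => ?_)
    (Ideal.radical_mono Ideal.le_comap_map)
  rw [Ideal.mem_comap, IsLocalization.algebraMap_mem_map_algebraMap_iff
    (vanishingIdeal K {(0 : ι → K)}).primeCompl] at hg
  obtain ⟨s, hs, hsg⟩ := hg
  rw [← vanishingIdeal_zeroLocus_eq_radical (K := K), mem_vanishingIdeal_iff, zeroLocus_span_range]
  intro x hx
  rw [aeval_eq_eval]
  exact eval_eq_zero_of_mul_mem_span_range hhom hx (mt mem_vanishingIdeal_singleton.mpr hs) hsg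

end Cone

section AlgebraicSets

variable {ι : Type*}

theorem isAlgSet_zeroLocus (I : Ideal (MvPolynomial ι ℂ)) : IsAlgSet (zeroLocus ℂ I) :=
  ⟨I, by ext; simp [aeval_eq_eval]⟩

theorem exists_mem_vanishingIdeal_eval_ne_zero {S : Set (ι → ℂ)} (hS : IsAlgSet S) {x : ι → ℂ}
    (hx : x ∉ S) : ∃ p ∈ vanishingIdeal ℂ S, eval x p ≠ 0 := by
  obtain ⟨T, rfl⟩ := hS
  rw [Set.mem_ofPred_eq] at hx
  push Not at hx
  obtain ⟨p, hp, hpx⟩ := hx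
  exact ⟨p, fun y hy => by rw [aeval_eq_eval]; exact hy p hp, hpx⟩

theorem nonempty_of_algDim_ne_bot {S : Set (ι → ℂ)} (hS : algDim S ≠ ⊥) : S.Nonempty := by
  rw [algDim, ne_eq, Order.krullDim_eq_bot_iff, not_isEmpty_iff] at hS
  obtain ⟨T, -, hT, hTS⟩ := hS
  exact hT.1.mono hTS

theorem algIrreducible_zeroLocus [Finite ι] {I : Ideal (MvPolynomial ι ℂ)}
    (hI : I.radical.IsPrime) : AlgIrreducible (zeroLocus ℂ I) := by
  rw [← vanishingIdeal_zeroLocus_eq_radical (K := ℂ)] at hI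
  refine ⟨?_, fun A B hA hB hAB => ?_⟩
  · rw [Set.nonempty_iff_ne_empty]
    intro h
    rw [h, vanishingIdeal_empty] at hI
    exact hI.ne_top rfl
  · by_contra! hcon
    obtain ⟨a, haI, ha⟩ := Set.not_subset.mp hcon.1
    obtain ⟨b, hbI, hb⟩ := Set.not_subset.mp hcon.2
    obtain ⟨p, hp, hpa⟩ := exists_mem_vanishingIdeal_eval_ne_zero hA ha
    obtain ⟨q, hq, hqb⟩ := exists_mem_vanishingIdeal_eval_ne_zero hB hb
    have hpq : p * q ∈ vanishingIdeal ℂ (zeroLocus ℂ I) := fun x hx => by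
      rw [map_mul, mul_eq_zero]
      exact (hAB hx).imp (hp x) (hq x)
    rcases hI.mem_or_mem hpq with h | h
    · exact hpa (h a haI)
    · exact hqb (h b hbI)

theorem ringKrullDim_quotient_le_algDim [Finite ι] (M : Submonoid (MvPolynomial ι ℂ)) {A : Type*}
    [CommRing A] [Algebra (MvPolynomial ι ℂ) A] [IsLocalization M A] {q : Ideal A}
    {W : Set (ι → ℂ)} (hW : zeroLocus ℂ (q.comap (algebraMap (MvPolynomial ι ℂ) A)) ⊆ W) :
    ringKrullDim (A ⧸ q) ≤ algDim W := by
  rw [ringKrullDim_quotient, algDim, ← Order.krullDim_orderDual (α := {T : Set (ι → ℂ) // _})]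
  let c (P : PrimeSpectrum A) : Ideal (MvPolynomial ι ℂ) := P.asIdeal.comap (algebraMap _ A)
  have hc (P : PrimeSpectrum A) : (c P).IsPrime := Ideal.IsPrime.comap _
  refine Order.krullDim_le_of_strictMono (fun P => OrderDual.toDual
    ⟨zeroLocus ℂ (c P.1), isAlgSet_zeroLocus _,
      algIrreducible_zeroLocus ((hc P.1).radical.symm ▸ hc P.1),
      (zeroLocus_anti_mono (Ideal.comap_mono P.2)).trans hW⟩) fun P P' hPP' => ?_
  rw [OrderDual.toDual_lt_toDual]
  refine lt_of_le_not_ge (zeroLocus_anti_mono (Ideal.comap_mono hPP'.le)) fun h => ?_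
  have hle : c P'.1 ≤ c P.1 := by
    rw [← IsPrime.vanishingIdeal_zeroLocus (K := ℂ) (c P.1),
      ← IsPrime.vanishingIdeal_zeroLocus (K := ℂ) (c P'.1)]
    exact vanishingIdeal_anti_mono h
  exact hPP'.not_ge ((IsLocalization.under_le_under_iff M _).mp hle)

end AlgebraicSets

section SingularLocus

variable {K ι κ : Type*} [Field K] [Fintype ι]

theorem linearIndependent_row_of_mulVec_surjective [Finite κ] {J : Matrix κ ι K}
    (hJ : Function.Surjective J.mulVec) : LinearIndependent K J.row := by
  classical
  cases nonempty_fintype κ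
  obtain ⟨B, hB⟩ := Matrix.mulVec_surjective_iff_exists_right_inverse.mp hJ
  rw [← Matrix.vecMul_injective_iff]
  refine Function.LeftInverse.injective (g := fun v => Matrix.vecMul v B) fun v => ?_
  change Matrix.vecMul (Matrix.vecMul v J) B = v
  rw [Matrix.vecMul_vecMul, hB, Matrix.vecMul_one]

/-- The common zeros of the `f i` at which their Jacobian matrix does not have full rank. These are
the points where the affine scheme defined by the `f i` is not smooth of codimension `card κ`. -/
def singularLocus (f : κ → MvPolynomial ι K) : Set (ι → K) :=
  {x | (∀ i, eval x (f i) = 0) ∧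
    ¬ Function.Surjective (Matrix.mulVecLin fun i j => eval x (pderiv j (f i)))}

theorem zeroLocus_sup_subset_singularLocus [Finite κ] {f : κ → MvPolynomial ι K}
    {p q : Ideal (MvPolynomial ι K)} (hp : p ∈ (Ideal.span (Set.range f)).minimalPrimes)
    (hq : q ∈ (Ideal.span (Set.range f)).minimalPrimes) (hpq : p ≠ q) :
    zeroLocus K (p ⊔ q) ⊆ singularLocus f := by
  intro x hx
  have hpx : p ≤ vanishingIdeal K {x} := fun g hg =>
    (mem_vanishingIdeal_singleton_iff x g).mpr (hx g (Ideal.mem_sup_left hg))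
  have hqx : q ≤ vanishingIdeal K {x} := fun g hg =>
    (mem_vanishingIdeal_singleton_iff x g).mpr (hx g (Ideal.mem_sup_right hg))
  have hfx (i : κ) : eval x (f i) = 0 :=
    mem_vanishingIdeal_singleton.mp (hpx (hp.1.2 (Ideal.subset_span ⟨i, rfl⟩)))
  exact ⟨hfx, fun hJ => hpq (eq_of_mem_minimalPrimes_of_linearIndependent hfx
    (linearIndependent_row_of_mulVec_surjective hJ) hp hq hpx hqx)⟩

end SingularLocus

section LocalRing

variable {ι κ : Type*} [Fintype ι] [Fintype κ] {f : κ → MvPolynomial ι ℂ}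

theorem depthGE_localization_quotient {k : ℕ} {x : ι → ℂ} (hx : ∀ i, eval x (f i) = 0)
    (hcard : k + Fintype.card κ = Fintype.card ι)
    (hdim : algDim {x | ∀ i, eval x (f i) = 0} ≤ k) :
    DepthGE (Localization.AtPrime (vanishingIdeal ℂ {x})) k
      (Localization.AtPrime (vanishingIdeal ℂ {x}) ⧸
        (Ideal.span (Set.range f)).map
          (algebraMap _ (Localization.AtPrime (vanishingIdeal ℂ {x})))) := by
  rw [← zeroLocus_span_range] at hdim
  have hquot := (ringKrullDim_quotient_le_algDim (vanishingIdeal ℂ {x}).primeCompl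
    (A := Localization.AtPrime (vanishingIdeal ℂ {x}))
    (zeroLocus_anti_mono Ideal.le_comap_map)).trans hdim
  rw [Ideal.map_span, ← Set.range_comp] at hquot ⊢
  refine .quotient_span_range (fun i => algebraMap_mem_maximalIdeal_localization (hx i)) ?_ hquot
  rw [hcard, ringKrullDim_localization_vanishingIdeal_singleton]

theorem isPrime_radical_map_localization {k : ℕ} {x : ι → ℂ} (hx : ∀ i, eval x (f i) = 0)
    (hcard : k + Fintype.card κ = Fintype.card ι)
    (hdim : algDim {x | ∀ i, eval x (f i) = 0} ≤ k) (hsing : algDim (singularLocus f) + 2 ≤ k) :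
    ((Ideal.span (Set.range f)).map
      (algebraMap _ (Localization.AtPrime (vanishingIdeal ℂ {x})))).radical.IsPrime := by
  have hdepth := depthGE_localization_quotient hx hcard hdim
  refine hdepth.isPrime_radical fun P hP Q hQ hPQ q _ hq => ?_
  rw [IsLocalization.minimalPrimes_map (vanishingIdeal ℂ {x}).primeCompl] at hP hQ
  have hne : P.comap (algebraMap (MvPolynomial ι ℂ) _) ≠ Q.comap (algebraMap _ _) := fun h =>
    hPQ (Function.LeftInverse.injective
      (IsLocalization.map_under (vanishingIdeal ℂ {x}).primeCompl _) h)
  have hle := sup_le_iff.mp hq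
  grw [← hsing]
  gcongr
  exact ringKrullDim_quotient_le_algDim (vanishingIdeal ℂ {x}).primeCompl
    ((zeroLocus_anti_mono (sup_le (Ideal.comap_mono hle.1) (Ideal.comap_mono hle.2))).trans
      (zeroLocus_sup_subset_singularLocus hP hQ hne))

end LocalRing

theorem stmt8_general {ι κ : Type*} [Fintype ι] [Fintype κ] (k : ℕ)
    (hcard : k + Fintype.card κ = Fintype.card ι) (f : κ → MvPolynomial ι ℂ) (d : κ → ℕ)
    (hhom : ∀ i, (f i).IsHomogeneous (d i))
    (hdim : algDim {x | ∀ i, eval x (f i) = 0} = k) (hsing : algDim (singularLocus f) + 2 ≤ k) :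
    AlgIrreducible {x | ∀ i, eval x (f i) = 0} := by
  obtain ⟨x, hx⟩ := nonempty_of_algDim_ne_bot (S := {x | ∀ i, eval x (f i) = 0}) (by simp [hdim])
  have hzero (i : κ) : eval 0 (f i) = 0 := eval_zero_of_isHomogeneous (hhom i) (hx i)
  have hlocal := isPrime_radical_map_localization hzero hcard hdim.le hsing
  have hprime : (Ideal.span (Set.range f)).radical.IsPrime := by
    rw [← comap_radical_map_span_range hhom
      (Localization.AtPrime (vanishingIdeal ℂ {(0 : ι → ℂ)}))]
    exact Ideal.IsPrime.comap _
  rw [← zeroLocus_span_range]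
  exact algIrreducible_zeroLocus hprime

/-- Let `X ⊆ ℙⁿ` be a complete intersection of `n − r` irreducible
hypersurfaces with `dim X = r ≥ 2` (cone dimension `r + 1`). If the singular locus of `X`
(where the Jacobian of the defining equations drops rank) has codimension `≥ 2` in `X`
(cone dimension `≤ r − 1`), then `X` is irreducible. -/
theorem stmt8 (n r : ℕ) (hr : 2 ≤ r) (hrn : r ≤ n)
    (f : Fin (n - r) → MvPolynomial (Fin (n + 1)) ℂ)
    (d : Fin (n - r) → ℕ) (hd : ∀ i, 1 ≤ d i)
    (hhom : ∀ i, (f i).IsHomogeneous (d i))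
    (hirr : ∀ i, Irreducible (f i))
    (X : Set (Fin (n + 1) → ℂ))
    (hX : X = {x | ∀ i, eval x (f i) = 0})
    (hdim : algDim X = ((r + 1 : ℕ) : WithBot ℕ∞))
    (hsing : algDim {x | x ∈ X ∧ ¬ Function.Surjective (Matrix.mulVecLin
        (fun (i : Fin (n - r)) (j : Fin (n + 1)) => eval x (pderiv j (f i))))}
      ≤ ((r - 1 : ℕ) : WithBot ℕ∞)) :
    AlgIrreducible X := by
  subst hX
  refine stmt8_general (r + 1) (by simp; lia) f d hhom hdim ((add_le_add_left hsing 2).trans ?_)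
  exact_mod_cast (by lia : r - 1 + 2 ≤ r + 1)
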